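/- Let K be a field and m ≥ 3. Write x^k := node([x,…,x]) for the k-corolla (k copies of x) and x² := node([x,x]). Then, in the free K-module on PRT': x ⧢ x^m = (m+1)·x^{m+1} + 2·Σ_{i=1}^{m} node([x,…,x, x², x,…,x]) (the arity-m grafting with x² in position i and x elsewhere) + x·x^m + x^m·x. -/

import Mathlib

inductive PTree : Type where
  | node : List PTree → PTree

namespace PTree

/-- the single-vertex tree -/
def x : PTree := node []

/-- the number of leaves of a tree -/
def deg : PTree → ℕ
  | node l => max 1 (l.attach.map fun t => deg t.1).sum
decreasing_by
  have := List.sizeOf_lt_of_mem t.2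
  simp; omega

/-- a tree is reduced if no vertex has arity 1 -/
inductive Reduced : PTree → Prop where
  | node (l : List PTree) (hlen : l.length ≠ 1) (h : ∀ t ∈ l, Reduced t) :
      Reduced (node l)

/-- the reduction of a tree -/
def red : PTree → PTree
  | node [t] => red t
  | node l => node (l.attach.map fun t => red t.1)
decreasing_by
  · simp; omega
  · have := List.sizeOf_lt_of_mem t.2
    simp; omega

mutual
/-- the spanning subtree `T_I` determined by a set `I ⊆ range (deg T)` of leaf positions
(counted from the left, starting at `0`) -/
def sub : PTree → Finset ℕ → PTree
  | node l, I => node (subList l I)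
/-- auxiliary: the list of spanning subtrees of the children, children without
selected leaves being dropped -/
def subList : List PTree → Finset ℕ → List PTree
  | [], _ => []
  | t :: ts, I =>
      (if (I.filter (· < t.deg)).Nonempty then [sub t (I.filter (· < t.deg))] else [])
        ++ subList ts ((I.filter fun j => t.deg ≤ j).image fun j => j - t.deg)
end

/-- the contraction `T|I`: the reduction of the spanning subtree, `1` (i.e. `none`) if `I = ∅` -/
def contract (T : PTree) (I : Finset ℕ) : Option PTree :=
  if I = ∅ then none else some (red (sub T I))

end PTree

/-- `PRT'`: finite planar rooted trees together with the empty tree `1 = none` -/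
abbrev OT := Option PTree

/-- `deg` on `PRT'` -/
def degO (o : OT) : ℕ := o.elim 0 PTree.deg

/-- membership in `PRT'` = reduced trees together with the empty tree `1` -/
def ROT (o : OT) : Prop := ∀ t, o = some t → t.Reduced

/-- contraction on `PRT'` -/
def contractO : OT → Finset ℕ → OT
  | none, _ => none
  | some t, I => PTree.contract t I

open Classical in
/-- `N_{S,T}(V)` as a finite set of subsets of the set of leaf positions of `V` -/
noncomputable def NFinset (S T V : OT) : Finset (Finset ℕ) :=
  (Finset.range (degO V)).powerset.filter fun I =>
    contractO V I = S ∧ contractO V (Finset.range (degO V) \ I) = T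

/-- `#N_{S,T}(V)` -/
noncomputable def Ncount (S T V : OT) : ℕ := (NFinset S T V).card

/-- the free `K`-module on `PRT'` (realized inside the free module on all of `Option PTree`;
the elements of the free module on `PRT'` are those whose support satisfies `ROT`) -/
abbrev AMod (K : Type) [Field K] := OT →₀ K

/-- `f` belongs to the free `K`-module on `PRT'` -/
def suppRed (K : Type) [Field K] (f : AMod K) : Prop := ∀ t ∈ f.support, ROT t

/-- the planar shuffle product `S ⧢ T = Σ_{V ∈ PRT'} #N_{S,T}(V)·V` of two monomials -/
noncomputable def shuffleM (K : Type) [Field K] (S T : OT) : AMod K :=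
  ∑ᶠ (V : OT) (_ : ROT V), Finsupp.single V ((Ncount S T V : K))

/-- the `K`-bilinear extension of the planar shuffle product -/
noncomputable def shuffleF (K : Type) [Field K] (f g : AMod K) : AMod K :=
  f.sum fun S a => g.sum fun T b => (a * b) • shuffleM K S T

/-- tensor-like product of a list of module elements, as a finitely supported
function on lists of basis elements -/
noncomputable def listProd (K : Type) [Field K] {σ : Type} : List (σ →₀ K) → (List σ →₀ K)
  | [] => Finsupp.single [] 1
  | f :: fs => f.sum fun t a => (listProd K fs).sum fun ts b => Finsupp.single (t :: ts) (a * b)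

/-- the `K`-multilinear extension of an operation on basis elements -/
noncomputable def mulExt (K : Type) [Field K] {σ τ : Type} (op : List σ → τ)
    (l : List (σ →₀ K)) : τ →₀ K :=
  (listProd K l).sum fun ts c => Finsupp.single (op ts) c

/-- `gr` : delete all entries equal to `1`, then return `1` if no entry remains,
the unique entry if exactly one remains, and the grafting `node` otherwise -/
def grO (ts : List OT) : OT :=
  match ts.reduceOption with
  | [] => none
  | [t] => some t
  | l => some (PTree.node l)

/-- the `K`-multilinear extension of `gr` -/
noncomputable def grF (K : Type) [Field K] (l : List (AMod K)) : AMod K := mulExt K grO l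

/-- the `K`-multilinear extension of the grafting `node` (junk value `0` on lists
containing the empty tree `1`, which never occurs in its uses here) -/
noncomputable def nodeF (K : Type) [Field K] (l : List (AMod K)) : AMod K :=
  (listProd K l).sum fun ts c =>
    match (ts.mapM (id : Option PTree → Option PTree) : Option (List PTree)) with
    | some l' => Finsupp.single (some (PTree.node l')) c
    | none => 0

namespace PTree

theorem ind {P : PTree → Prop} (h : ∀ l, (∀ t ∈ l, P t) → P (node l)) : ∀ t, P t
  | node l => h l (fun t ht => ind h t)
decreasing_by
  have := List.sizeOf_lt_of_mem ht
  simp; omega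

/-- total number of leaves of a forest -/
def degL (l : List PTree) : ℕ := (l.map deg).sum

theorem deg_node (l : List PTree) : deg (node l) = max 1 (degL l) := by
  rw [deg, degL]
  congr 2
  exact List.attach_map_val (l := l) (f := deg)

theorem deg_pos (t : PTree) : 1 ≤ deg t := by
  cases t; rw [deg_node]; exact le_max_left _ _

@[simp] theorem degL_nil : degL [] = 0 := rfl
@[simp] theorem degL_cons (t : PTree) (l) : degL (t :: l) = deg t + degL l := by simp [degL]

theorem deg_x : deg x = 1 := by simp [x, deg_node]

theorem length_le_degL (l : List PTree) : l.length ≤ degL l := by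
  induction l with
  | nil => simp
  | cons t l ih => have := deg_pos t; simp; omega

theorem deg_node_of_ne (l : List PTree) (h : l ≠ []) : deg (node l) = degL l := by
  rw [deg_node]
  have := length_le_degL l
  have := List.length_pos_iff.2 h
  omega

theorem red_sing (t : PTree) : red (node [t]) = red t := by rw [red]

theorem red_node (l : List PTree) (h : l.length ≠ 1) : red (node l) = node (l.map red) := by
  rw [red]
  · congr 1
    exact List.attach_map_val (l := l) (f := red)
  · rintro t rfl; simp at h

theorem reduced_node {l : List PTree} :
    Reduced (node l) ↔ l.length ≠ 1 ∧ ∀ t ∈ l, Reduced t :=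
  ⟨fun h => by cases h with | node l h1 h2 => exact ⟨h1, h2⟩, fun h => .node l h.1 h.2⟩

theorem reduced_red (t : PTree) : Reduced (red t) := by
  induction t using ind with
  | h l ih =>
    by_cases h : l.length = 1
    · obtain ⟨t, rfl⟩ := List.length_eq_one_iff.1 h
      rw [red_sing]; exact ih t (by simp)
    · rw [red_node l h, reduced_node]
      refine ⟨by simpa using h, ?_⟩
      intro s hs
      obtain ⟨t, ht, rfl⟩ := List.mem_map.1 hs
      exact ih t ht

theorem red_of_reduced (t : PTree) (h : Reduced t) : red t = t := by
  induction t using ind with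
  | h l ih =>
    rw [reduced_node] at h
    rw [red_node l h.1]
    congr 1
    conv_rhs => rw [← List.map_id l]
    exact List.map_congr_left (fun t ht => ih t ht (h.2 t ht))

theorem deg_red (t : PTree) : deg (red t) = deg t := by
  induction t using ind with
  | h l ih =>
    by_cases h : l.length = 1
    · obtain ⟨t, rfl⟩ := List.length_eq_one_iff.1 h
      rw [red_sing, ih t (by simp), deg_node_of_ne _ (by simp)]; simp
    · rw [red_node l h, deg_node, deg_node]
      congr 1
      rw [degL, degL, List.map_map]
      congr 1
      exact List.map_congr_left (fun t ht => ih t ht)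

theorem eq_x_of_deg (t : PTree) (h : Reduced t) (h1 : deg t = 1) : t = x := by
  obtain ⟨l⟩ := t
  rw [reduced_node] at h
  rw [deg_node] at h1
  have := length_le_degL l
  have h0 : l.length = 0 := by have := h.1; omega
  rw [List.length_eq_zero_iff.1 h0]; rfl

theorem sub_node (l I) : sub (node l) I = node (subList l I) := by rw [sub]
theorem subList_nil (I) : subList [] I = [] := by rw [subList]
theorem subList_cons (t : PTree) (ts I) : subList (t :: ts) I =
    (if (I.filter (· < t.deg)).Nonempty then [sub t (I.filter (· < t.deg))] else [])
        ++ subList ts ((I.filter fun j => t.deg ≤ j).image fun j => j - t.deg) := by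
  rw [subList]

theorem degL_subList (l : List PTree)
    (ih : ∀ t ∈ l, ∀ I : Finset ℕ, I.Nonempty → I ⊆ Finset.range (deg t) → deg (sub t I) = I.card) :
    ∀ I : Finset ℕ, I ⊆ Finset.range (degL l) → degL (subList l I) = I.card := by
  induction l with
  | nil => intro I hI; simp at hI; simp [hI, subList_nil]
  | cons t ts ih2 =>
    intro I hI
    have e1 : degL (subList ts ((I.filter fun j => t.deg ≤ j).image fun j => j - t.deg))
        = (I.filter fun j => t.deg ≤ j).card := by
      rw [ih2 (fun s hs => ih s (by simp [hs]))]
      · apply Finset.card_image_of_injOn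
        intro a ha b hb hab
        simp at ha hb hab; omega
      · intro j hj
        simp only [Finset.mem_image, Finset.mem_filter] at hj
        obtain ⟨a, ⟨ha, hb⟩, rfl⟩ := hj
        have := hI ha
        simp at this ⊢; omega
    have e2 : I.card = (I.filter (· < t.deg)).card + (I.filter fun j => t.deg ≤ j).card := by
      rw [← Finset.card_filter_add_card_filter_not (s := I) (· < t.deg)]
      simp
    rw [subList_cons, e2]
    split_ifs with hn
    · simp only [List.singleton_append, degL_cons, e1]
      rw [ih t (by simp) _ hn]
      intro j hj; simp at hj ⊢; exact hj.2
    · rw [Finset.not_nonempty_iff_eq_empty] at hn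
      rw [hn]; simp [e1]

theorem deg_sub (t : PTree) : ∀ I : Finset ℕ, I.Nonempty → I ⊆ Finset.range (deg t) →
    deg (sub t I) = I.card := by
  induction t using ind with
  | h l ih =>
    intro I hn hI
    rw [sub_node, deg_node]
    by_cases hl : l = []
    · subst hl
      simp only [deg_node, subList_nil, degL_nil] at *
      have h1 := Finset.card_le_card hI
      have h2 := hn.card_pos
      simp at h1 ⊢; omega
    · rw [deg_node_of_ne l hl] at hI
      rw [degL_subList l ih I hI]
      have h2 := hn.card_pos
      omega

theorem contract_eq_x (t : PTree) (I : Finset ℕ) (hI : I ⊆ Finset.range (deg t)) :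
    contract t I = some x ↔ ∃ i, I = {i} := by
  rw [← Finset.card_eq_one, contract]
  split_ifs with h
  · subst h; simp
  · have hd := deg_sub t I (Finset.nonempty_iff_ne_empty.2 h) hI
    rw [Option.some_inj]
    constructor
    · intro hx; rw [← hd, ← deg_red, hx, deg_x]
    · intro hc; exact eq_x_of_deg _ (reduced_red _) (by rw [deg_red, hd, hc])

/-- grafting, without reduction of the children -/
def graft : List PTree → Option PTree
  | [] => none
  | [t] => some t
  | l => some (node l)

mutual
/-- all results of deleting a leaf -/
def dels : PTree → List (Option PTree)
  | node [] => [none]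
  | node (t :: ts) => (dl (t :: ts)).map graft
def dl : List PTree → List (List PTree)
  | [] => []
  | t :: ts => (dels t).map (fun o => o.toList ++ ts) ++ (dl ts).map (fun l => t :: l)
end

theorem dels_x : dels x = [none] := by rw [x, dels]
theorem dels_node (l : List PTree) (h : l ≠ []) : dels (node l) = (dl l).map graft := by
  cases l with
  | nil => simp at h
  | cons t ts => rw [dels]
theorem dl_nil : dl [] = [] := by rw [dl]
theorem dl_cons (t : PTree) (ts) : dl (t :: ts) =
  (dels t).map (fun o => o.toList ++ ts) ++ (dl ts).map (fun l => t :: l) := by rw [dl]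

theorem subList_full (l : List PTree) (ih : ∀ t ∈ l, sub t (Finset.range (deg t)) = t) :
    subList l (Finset.range (degL l)) = l := by
  induction l with
  | nil => rw [subList_nil]
  | cons t ts ih2 =>
    have e1 : (Finset.range (degL (t :: ts))).filter (· < t.deg) = Finset.range (deg t) := by
      ext j; simp; omega
    have e2 : ((Finset.range (degL (t :: ts))).filter (fun j => t.deg ≤ j)).image
        (fun j => j - t.deg) = Finset.range (degL ts) := by
      ext j; simp only [Finset.mem_image, Finset.mem_filter, Finset.mem_range, degL_cons]
      constructor
      · rintro ⟨a, h, rfl⟩; omega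
      · intro h; exact ⟨j + deg t, by omega, by omega⟩
    have := deg_pos t
    rw [subList_cons, e1, e2, ih2 (fun s hs => ih s (by simp [hs])), ih t (by simp), if_pos]
    · rfl
    · simp; omega

theorem sub_full (t : PTree) : sub t (Finset.range (deg t)) = t := by
  induction t using ind with
  | h l ih =>
    by_cases hl : l = []
    · subst hl; rw [sub_node, subList_nil]
    · rw [sub_node, deg_node_of_ne l hl, subList_full l ih]

theorem red_node_graft (l : List PTree) (h : l ≠ []) :
    some (red (node l)) = graft (l.map red) := by
  match l with
  | [] => simp at h
  | [t] => rw [red_sing]; rfl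
  | a :: b :: l => rw [red_node _ (by simp)]; rfl

theorem map_red_of (l : List PTree) (h : ∀ t ∈ l, Reduced t) : l.map red = l := by
  conv_rhs => rw [← List.map_id l]
  exact List.map_congr_left (fun t ht => red_of_reduced t (h t ht))

theorem dl_spec (l : List PTree) (hr : ∀ t ∈ l, Reduced t)
    (ih : ∀ t ∈ l, (List.range (deg t)).map
      (fun i => contract t (Finset.range (deg t) \ {i})) = dels t) :
    (List.range (degL l)).map
      (fun i => (subList l (Finset.range (degL l) \ {i})).map red) = dl l := by
  induction l with
  | nil => simp [dl_nil]
  | cons t ts ih2 =>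
    rw [dl_cons, ← ih t (by simp),
      ← ih2 (fun s hs => hr s (by simp [hs])) (fun s hs => ih s (by simp [hs])),
      degL_cons, List.range_add, List.map_append, List.map_map, List.map_map, List.map_map]
    congr 1
    · apply List.map_congr_left
      intro i hi
      rw [List.mem_range] at hi
      have e1 : (Finset.range (deg t + degL ts) \ {i}).filter (· < t.deg)
          = Finset.range (deg t) \ {i} := by
        ext j; simp; omega
      have e2 : ((Finset.range (deg t + degL ts) \ {i}).filter (fun j => t.deg ≤ j)).image
          (fun j => j - t.deg) = Finset.range (degL ts) := by
        ext j; simp only [Finset.mem_image, Finset.mem_filter, Finset.mem_range,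
          Finset.mem_sdiff, Finset.mem_singleton]
        constructor
        · rintro ⟨a, h, rfl⟩; omega
        · intro h; exact ⟨j + deg t, by omega, by omega⟩
      rw [subList_cons, e1, e2, subList_full ts (fun s _ => sub_full s), List.map_append,
        map_red_of ts (fun s hs => hr s (by simp [hs]))]
      simp only [Function.comp, contract]
      congr 1
      by_cases hE : Finset.range (deg t) \ {i} = ∅
      · rw [if_pos hE, hE]; simp
      · rw [if_neg hE, if_pos (Finset.nonempty_iff_ne_empty.2 hE)]; simp
    · apply List.map_congr_left
      intro i hi
      rw [List.mem_range] at hi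
      have e1 : (Finset.range (deg t + degL ts) \ {deg t + i}).filter (· < t.deg)
          = Finset.range (deg t) := by
        ext j; simp; omega
      have e2 : ((Finset.range (deg t + degL ts) \ {deg t + i}).filter
          (fun j => t.deg ≤ j)).image
          (fun j => j - t.deg) = Finset.range (degL ts) \ {i} := by
        ext j; simp only [Finset.mem_image, Finset.mem_filter, Finset.mem_range,
          Finset.mem_sdiff, Finset.mem_singleton]
        constructor
        · rintro ⟨a, h, rfl⟩; omega
        · intro h; exact ⟨j + deg t, by omega, by omega⟩
      have := deg_pos t
      simp only [Function.comp]
      rw [subList_cons, e1, e2, if_pos (by simp; omega), sub_full]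
      simp [red_of_reduced t (hr t (by simp))]

theorem dels_spec (t : PTree) (hr : Reduced t) : (List.range (deg t)).map
      (fun i => contract t (Finset.range (deg t) \ {i})) = dels t := by
  induction t using ind with
  | h l ih =>
    by_cases hl : l = []
    · subst hl
      change _ = dels x
      rw [dels_x]; change List.map _ (List.range (deg x)) = _
      rw [deg_node]
      simp [contract, deg_x]
    · have hr' := reduced_node.1 hr
      have hlen := List.length_pos_iff.2 hl
      have := length_le_degL l
      have hr1 := hr'.1
      rw [dels_node l hl, ← dl_spec l hr'.2 (fun t ht => ih t ht (hr'.2 t ht)),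
        deg_node_of_ne l hl, List.map_map]
      apply List.map_congr_left
      intro i hi
      rw [List.mem_range] at hi
      have hc : (Finset.range (degL l) \ {i}).card = degL l - 1 := by
        rw [Finset.card_sdiff_of_subset (by simpa using hi)]; simp
      have hne : Finset.range (degL l) \ {i} ≠ ∅ := by
        intro h; rw [h] at hc; simp at hc; omega
      rw [contract, if_neg hne, sub_node]
      simp only [Function.comp]
      rw [red_node_graft]
      intro h
      have h2 := degL_subList l (fun t _ => deg_sub t) (Finset.range (degL l) \ {i})
        Finset.sdiff_subset
      rw [h, hc] at h2; simp at h2; omega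

end PTree

namespace PTree
open Classical

theorem countP_split {α : Type} (p q r : α → Prop)
    [DecidablePred p] [DecidablePred q] [DecidablePred r] (L : List α)
    (h : ∀ a, p a ↔ q a ∨ r a) (h2 : ∀ a, ¬ (q a ∧ r a)) :
    L.countP (fun a => decide (p a)) =
      L.countP (fun a => decide (q a)) + L.countP (fun a => decide (r a)) := by
  induction L with
  | nil => simp
  | cons a L ih =>
    have h1 := h a
    have h3 := h2 a
    simp only [List.countP_cons, ih, decide_eq_true_eq]
    by_cases hq : q a <;> by_cases hr : r a <;> simp_all <;> omega

theorem countP_and {α : Type} (p q : α → Prop)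
    [DecidablePred p] [DecidablePred q] (A : Prop) [Decidable A] (L : List α)
    (h : ∀ a, p a ↔ A ∧ q a) :
    L.countP (fun a => decide (p a)) = if A then L.countP (fun a => decide (q a)) else 0 := by
  split_ifs with hA
  · simp [h, hA]
  · simp [h, hA]

theorem length_dl (l : List PTree) : ∀ d ∈ dl l, l.length ≤ d.length + 1 := by
  induction l with
  | nil => simp [dl_nil]
  | cons t ts ih =>
    intro d hd
    rw [dl_cons, List.mem_append, List.mem_map, List.mem_map] at hd
    rcases hd with ⟨o, _, rfl⟩ | ⟨d', hd', rfl⟩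
    · simp
    · have := ih d' hd'
      simp; omega

theorem graft_none (d : List PTree) : graft d = none ↔ d = [] := by
  match d with
  | [] => simp [graft]
  | [t] => simp [graft]
  | a :: b :: l => simp [graft]

theorem graft_x (d : List PTree) : graft d = some x ↔ d = [x] := by
  match d with
  | [] => simp [graft]
  | [t] => simp [graft]
  | a :: b :: l => simp [graft, x]

theorem graft_node (w : List PTree) (hw : 2 ≤ w.length) (d : List PTree) :
    graft d = some (node w) ↔ d = w ∨ d = [node w] := by
  match d with
  | [] => simp [graft]; rintro rfl; simp at hw
  | [t] => simp [graft]; rintro rfl; simp at hw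
  | a :: b :: l => simp [graft]

theorem count_none (t : PTree) (ht : Reduced t) :
    (dels t).countP (fun o => decide (o = none)) = if t = x then 1 else 0 := by
  obtain ⟨l⟩ := t
  by_cases hl : l = []
  · subst hl; change (dels x).countP _ = if x = x then 1 else 0
    rw [dels_x]; simp
  · rw [if_neg (by simpa [x] using hl), dels_node l hl, List.countP_map, List.countP_eq_zero]
    intro d hd
    have := length_dl l d hd
    have h1 := (reduced_node.1 ht).1
    have := List.length_pos_iff.2 hl
    simp [Function.comp, graft_none]
    rintro rfl
    simp at this; omega

theorem count_rep (l : List PTree) (hr : ∀ t ∈ l, Reduced t)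
    (hP : ∀ t ∈ l, (dels t).countP (fun o => decide (o = some x))
      = if t = node [x, x] then 2 else 0) :
    ∀ m, (dl l).countP (fun d => decide (d = List.replicate m x))
      = (if l = List.replicate (m + 1) x then m + 1 else 0)
        + ∑ i ∈ Finset.range m,
          if l = (List.replicate m x).set i (node [x, x]) then 2 else 0 := by
  induction l with
  | nil =>
    intro m
    rw [dl_nil]
    symm
    simp only [List.countP_nil, Nat.add_eq_zero_iff, Finset.sum_eq_zero_iff, Finset.mem_range]
    refine ⟨by simp [List.replicate_succ], fun i hi => ?_⟩
    rw [if_neg]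
    intro h
    have := congrArg List.length h
    simp at this; omega
  | cons t ts ih =>
    have ih' := ih (fun s hs => hr s (by simp [hs])) (fun s hs => hP s (by simp [hs]))
    have hn := count_none t (hr t (by simp))
    have hp := hP t (by simp)
    intro m
    rw [dl_cons, List.countP_append, List.countP_map, List.countP_map]
    cases m with
    | zero =>
      simp only [Function.comp_def]
      rw [countP_and (fun o : Option PTree => o.toList ++ ts = List.replicate 0 x)
        (fun o => o = none) (ts = []), hn]
      · by_cases h1 : ts = [] <;> by_cases h2 : t = x <;> simp [h1, h2]
      · intro a; cases a <;> simp
    | succ m =>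
      simp only [Function.comp_def]
      rw [countP_split (fun o : Option PTree => o.toList ++ ts = List.replicate (m + 1) x)
        (fun o => ts = List.replicate (m + 1) x ∧ o = none)
        (fun o => ts = List.replicate m x ∧ o = some x),
        countP_and (fun o : Option PTree => ts = List.replicate (m + 1) x ∧ o = none)
          (fun o => o = none) _ _ (fun _ => Iff.rfl),
        countP_and (fun o : Option PTree => ts = List.replicate m x ∧ o = some x)
          (fun o => o = some x) _ _ (fun _ => Iff.rfl),
        countP_and (fun d : List PTree => t :: d = List.replicate (m + 1) x)
          (fun d => d = List.replicate m x) (t = x), hn, hp, ih', Finset.sum_range_succ']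
      · simp only [List.replicate_succ, List.set_cons_succ, List.set_cons_zero, List.cons.injEq]
        by_cases h2 : t = x
        · have h3 : ¬ x = node [x, x] := by simp [x]
          subst h2
          simp only [h3, true_and, false_and, if_true, if_false]
          split_ifs <;> omega
        · simp only [h2, false_and, if_false]
          by_cases h4 : t = node [x, x] <;> simp [h4]
      · intro a; simp [List.replicate_succ]
      · intro a; cases a with
        | none => simp
        | some a => simp [List.replicate_succ, and_comm]
      · rintro a ⟨⟨_, h⟩, _, h'⟩; simp [h] at h'

theorem count_x (t : PTree) (ht : Reduced t) :
    (dels t).countP (fun o => decide (o = some x)) = if t = node [x, x] then 2 else 0 := by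
  induction t using ind with
  | h l ih =>
    by_cases hl : l = []
    · subst hl; change (dels x).countP _ = if x = _ then _ else _
      rw [dels_x]; simp [x]
    · have hr := reduced_node.1 ht
      rw [dels_node l hl, List.countP_map]
      simp only [Function.comp_def, graft_x]
      have := count_rep l hr.2 (fun t h => ih t h (hr.2 t h)) 1
      simp only [List.replicate_succ, List.replicate_zero] at this
      rw [this]
      have h1 : l ≠ [node [x, x]] := by rintro rfl; simp at hr
      simp [h1]

theorem count_sing (l : List PTree) (hl : 2 ≤ l.length) (hr : ∀ t ∈ l, Reduced t) (w : PTree)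
    (hw : w ≠ x) :
    (dl l).countP (fun d => decide (d = [w]))
      = (if l = [x, w] then 1 else 0) + if l = [w, x] then 1 else 0 := by
  match l with
  | [] => simp at hl
  | [_] => simp at hl
  | [t, u] =>
    have h1 := count_none t (hr t (by simp))
    have h2 := count_none u (hr u (by simp))
    rw [dl_cons, dl_cons, dl_nil]
    simp only [List.countP_append, List.countP_map, Function.comp_def, List.map_append,
      List.map_nil, List.countP_nil, List.append_nil]
    rw [countP_and (fun o : Option PTree => o.toList ++ [u] = [w]) (fun o => o = none) (u = w),
      countP_and (fun o : Option PTree => t :: o.toList = [w]) (fun o => o = none) (t = w),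
      h1, h2]
    · simp only [List.cons.injEq, and_true]
      by_cases h3 : u = w <;> by_cases h4 : t = w <;> by_cases h5 : u = x <;>
        by_cases h6 : t = x <;> simp_all
    · intro a; cases a <;> simp
    · intro a; cases a <;> simp
  | a :: b :: c :: l =>
    have h0 : (dl (a :: b :: c :: l)).countP (fun d => decide (d = [w])) = 0 := by
      rw [List.countP_eq_zero]
      intro d hd
      have := length_dl _ d hd
      simp
      rintro rfl
      simp at this
    rw [h0]; simp

theorem count_corolla (l : List PTree) (hr : Reduced (node l)) (m : ℕ) (hm : 3 ≤ m) :
    (dels (node l)).countP (fun o => decide (o = some (node (List.replicate m x))))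
      = (if l = List.replicate (m + 1) x then m + 1 else 0)
        + (∑ i ∈ Finset.range m,
          if l = (List.replicate m x).set i (node [x, x]) then 2 else 0)
        + (if l = [x, node (List.replicate m x)] then 1 else 0)
        + (if l = [node (List.replicate m x), x] then 1 else 0) := by
  have hr' := reduced_node.1 hr
  by_cases hl : l = []
  · subst hl
    have e := count_rep [] (by simp) (by simp) m
    rw [← e, dl_nil]
    change (dels x).countP _ = _
    rw [dels_x]; simp
  · have hlen := List.length_pos_iff.2 hl
    rw [dels_node l hl, List.countP_map]
    simp only [Function.comp_def]
    rw [countP_split (fun d => graft d = some (node (List.replicate m x))) _ _ _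
      (graft_node (List.replicate m x) (by simp; omega)),
      count_rep l hr'.2 (fun t h => count_x t (hr'.2 t h)), count_sing l _ hr'.2]
    · ring
    · simp [x]; omega
    · have := hr'.1; omega
    · rintro d ⟨rfl, h⟩
      have := congrArg List.length h
      simp at this; omega

theorem Ncount_eq (t : PTree) (ht : Reduced t) (T : OT) :
    Ncount (some x) T (some t) = (dels t).countP (fun o => decide (o = T)) := by
  rw [← dels_spec t ht, List.countP_map, Ncount]
  have : NFinset (some x) T (some t) = ((Finset.range (deg t)).filter
      (fun i => contract t (Finset.range (deg t) \ {i}) = T)).image (fun i => {i}) := by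
    ext I
    rw [NFinset, Finset.mem_filter, Finset.mem_powerset, Finset.mem_image]
    simp only [Finset.mem_filter, degO, Option.elim_some, contractO, Finset.mem_range]
    constructor
    · rintro ⟨h1, h2, h3⟩
      obtain ⟨i, rfl⟩ := (contract_eq_x t I h1).1 h2
      exact ⟨i, ⟨by simpa using h1, h3⟩, rfl⟩
    · rintro ⟨i, ⟨h1, h2⟩, rfl⟩
      have h : {i} ⊆ Finset.range (deg t) := by simpa using h1
      exact ⟨h, (contract_eq_x t _ h).2 ⟨i, rfl⟩, h2⟩
  rw [this, Finset.card_image_of_injective _ Finset.singleton_injective]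
  rw [List.countP_eq_length_filter]
  rfl

theorem reduced_x : Reduced x := reduced_node.2 (by simp)

theorem reduced_rep (m : ℕ) (hm : 2 ≤ m) : Reduced (node (List.replicate m x)) := by
  rw [reduced_node]
  refine ⟨by simp; omega, fun t ht => ?_⟩
  rw [List.eq_of_mem_replicate ht]; exact reduced_x

theorem reduced_set (m i : ℕ) (hm : 2 ≤ m) :
    Reduced (node ((List.replicate m x).set i (node [x, x]))) := by
  rw [reduced_node]
  refine ⟨by simp; omega, fun t ht => ?_⟩
  rcases List.mem_or_eq_of_mem_set ht with h | rfl
  · rw [List.eq_of_mem_replicate h]; exact reduced_x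
  · exact reduced_rep 2 le_rfl

theorem reduced_pair (s t : PTree) (hs : Reduced s) (ht : Reduced t) : Reduced (node [s, t]) := by
  rw [reduced_node]
  simp [hs, ht]

/-- the coefficient function of the right-hand side -/
noncomputable def coef (m : ℕ) (V : OT) : ℕ :=
  (if V = some (node (List.replicate (m + 1) x)) then m + 1 else 0)
        + (∑ i ∈ Finset.range m,
          if V = some (node ((List.replicate m x).set i (node [x, x]))) then 2 else 0)
        + (if V = some (node [x, node (List.replicate m x)]) then 1 else 0)
        + (if V = some (node [node (List.replicate m x), x]) then 1 else 0)

theorem coef_eq (m : ℕ) (hm : 3 ≤ m) (V : OT) (hV : ROT V) :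
    Ncount (some x) (some (node (List.replicate m x))) V = coef m V := by
  cases V with
  | none => simp [coef, Ncount, NFinset, contractO]
  | some t =>
    obtain ⟨l⟩ := t
    rw [Ncount_eq _ (hV _ rfl), count_corolla l (hV _ rfl) m hm]
    simp [coef]

theorem coef_support (m : ℕ) (V : OT) (h : coef m V ≠ 0) :
    V = some (node (List.replicate (m + 1) x)) ∨
    (∃ i ∈ Finset.range m, V = some (node ((List.replicate m x).set i (node [x, x])))) ∨
    V = some (node [x, node (List.replicate m x)]) ∨
    V = some (node [node (List.replicate m x), x]) := by
  by_contra hc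
  push Not at hc
  obtain ⟨h1, h2, h3, h4⟩ := hc
  apply h
  rw [coef, if_neg h1, if_neg h3, if_neg h4, Finset.sum_eq_zero (fun i hi => if_neg (h2 i hi))]
  rfl

theorem coef_ROT (m : ℕ) (hm : 3 ≤ m) (V : OT) (h : coef m V ≠ 0) : ROT V := by
  have := reduced_rep m (by omega)
  rcases coef_support m V h with rfl | ⟨i, _, rfl⟩ | rfl | rfl <;>
    (intro t ht; rw [Option.some_inj] at ht; subst ht)
  · exact reduced_rep _ (by omega)
  · exact reduced_set _ _ (by omega)
  · exact reduced_pair _ _ reduced_x this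
  · exact reduced_pair _ _ this reduced_x

theorem shuffle_aux (K : Type) [Field K] (m : ℕ) (hm : 3 ≤ m) (W : OT) :
    shuffleM K (some x) (some (node (List.replicate m x))) W = (coef m W : K) := by
  have e : shuffleM K (some x) (some (node (List.replicate m x)))
      = ∑ᶠ V : OT, Finsupp.single V (coef m V : K) := by
    rw [shuffleM]
    apply finsum_congr
    intro V
    by_cases hV : ROT V
    · rw [finsum_eq_if, if_pos hV, coef_eq m hm V hV]
    · rw [finsum_eq_if, if_neg hV]
      have : coef m V = 0 := by
        by_contra h; exact hV (coef_ROT m hm V h)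
      simp [this]
  let s : Finset OT := {some (node (List.replicate (m + 1) x)),
    some (node [x, node (List.replicate m x)]), some (node [node (List.replicate m x), x])} ∪
    (Finset.range m).image (fun i => some (node ((List.replicate m x).set i (node [x, x]))))
  have hs : ∀ V, coef m V ≠ 0 → V ∈ s := by
    intro V hV
    simp only [s, Finset.mem_union, Finset.mem_insert, Finset.mem_singleton, Finset.mem_image]
    rcases coef_support m V hV with h | ⟨i, hi, h⟩ | h | h
    · simp [h]
    · exact Or.inr ⟨i, hi, h.symm⟩
    · simp [h]
    · simp [h]
  rw [e, finsum_eq_sum_of_support_subset (s := s)]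
  · rw [Finsupp.finsetSum_apply]
    simp only [Finsupp.single_apply]
    rw [Finset.sum_ite_eq' s W]
    split_ifs with h
    · rfl
    · have : coef m W = 0 := by
        by_contra h'; exact h (hs W h')
      simp [this]
  · intro V hV
    apply hs
    intro h
    simp [h] at hV

end PTree

/-- For `m ≥ 3`, with `x^k` the `k`-corolla and `x² = node [x,x]`:
`x ⧢ x^m = (m+1)·x^{m+1} + 2·Σ_{i=1}^m node [x,…,x², …,x] (x² in position i)
+ x·x^m + x^m·x`. -/
theorem shuffle_x_corolla (K : Type) [Field K] (m : ℕ) (hm : 3 ≤ m) :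
    shuffleM K (some PTree.x) (some (PTree.node (List.replicate m PTree.x)))
      = (m + 1) • Finsupp.single (some (PTree.node (List.replicate (m + 1) PTree.x))) 1
        + 2 • ∑ i ∈ Finset.range m,
            Finsupp.single (some (PTree.node
              ((List.replicate m PTree.x).set i (PTree.node [PTree.x, PTree.x])))) 1
        + Finsupp.single (some (PTree.node
            [PTree.x, PTree.node (List.replicate m PTree.x)])) 1
        + Finsupp.single (some (PTree.node
            [PTree.node (List.replicate m PTree.x), PTree.x])) 1 := by
  classical
  ext W
  rw [PTree.shuffle_aux K m hm W, PTree.coef]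
  simp only [Finsupp.add_apply, Finsupp.smul_apply, Finsupp.finsetSum_apply,
    Finsupp.single_apply, Finset.smul_sum]
  push_cast
  simp only [@eq_comm _ W]
  simp
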